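/- Let P be a propositional normal logic program, let M_P be its well-founded model, and define the M_P-partial level mapping l_P by l_P(A) = the least ordinal α such that A is not undefined in W_P↑(α+1). Then P satisfies (WF) with respect to M_P and l_P. -/

import Mathlib

namespace LP

/-- A literal over a set of propositional atoms: an atom or a negated atom. -/
inductive Lit (atom : Type) where
  | pos : atom → Lit atom
  | neg : atom → Lit atom

/-- The underlying atom of a literal. -/
def Lit.atomOf {atom : Type} : Lit atom → atom
  | .pos a => a
  | .neg a => a

/-- A clause `head ← pos₁,…,posₙ, ¬neg₁,…,¬negₘ`. -/
structure Clause (atom : Type) where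
  head : atom
  pos : Finset atom
  neg : Finset atom

variable {atom : Type}

/-- A (propositional) normal logic program: a set of clauses. -/
abbrev Program (atom : Type) := Set (Clause atom)

/-- Partial interpretations: sets of literals. -/
abbrev Interp (atom : Type) := Set (Lit atom)

def Consistent (I : Interp atom) : Prop := ∀ a : atom, ¬ (Lit.pos a ∈ I ∧ Lit.neg a ∈ I)

def Total (I : Interp atom) : Prop := ∀ a : atom, Lit.pos a ∈ I ∨ Lit.neg a ∈ I

/-- An atom is defined (true or false, i.e. not undefined) in `I`. -/
def Defined (I : Interp atom) (A : atom) : Prop := Lit.pos A ∈ I ∨ Lit.neg A ∈ I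

/-- Every body literal of the clause is true in `I`. -/
def BodyTrue (I : Interp atom) (C : Clause atom) : Prop :=
  (∀ a ∈ C.pos, Lit.pos a ∈ I) ∧ (∀ b ∈ C.neg, Lit.neg b ∈ I)

/-- Some body literal of the clause is false in `I`. -/
def BodyFalse (I : Interp atom) (C : Clause atom) : Prop :=
  (∃ a ∈ C.pos, Lit.neg a ∈ I) ∨ (∃ b ∈ C.neg, Lit.pos b ∈ I)

/-- Three-valued model. -/
def Model3 (P : Program atom) (I : Interp atom) : Prop :=
  Consistent I ∧ ∀ C ∈ P,
    (BodyTrue I C → Lit.pos C.head ∈ I) ∧ (¬ BodyFalse I C → Lit.neg C.head ∉ I)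

/-- Two-valued model. -/
def Model2 (P : Program atom) (M : Set atom) : Prop :=
  ∀ C ∈ P, (∀ a ∈ C.pos, a ∈ M) → (∀ b ∈ C.neg, b ∉ M) → C.head ∈ M

/-- A program is definite if no clause has negative body literals. -/
def Definite (P : Program atom) : Prop := ∀ C ∈ P, C.neg = ∅

/-- The one-step operator `T_P⁺` for definite programs. -/
def Tplus (P : Program atom) (M : Set atom) : Set atom :=
  {A | ∃ C ∈ P, C.head = A ∧ C.neg = ∅ ∧ ∀ a ∈ C.pos, a ∈ M}

def TplusIter (P : Program atom) : ℕ → Set atom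
  | 0 => ∅
  | n + 1 => Tplus P (TplusIter P n)

/-- `T_P⁺ ↑ ω`, the least two-valued model of a definite program. -/
def TplusOmega (P : Program atom) : Set atom := ⋃ n, TplusIter P n

/-- The Gelfond–Lifschitz reduct `P/M`. -/
def GLreduct (P : Program atom) (M : Set atom) : Program atom :=
  {C' | ∃ C ∈ P, (∀ b ∈ C.neg, b ∉ M) ∧ C' = ⟨C.head, C.pos, ∅⟩}

/-- The Gelfond–Lifschitz operator. -/
def GLop (P : Program atom) (M : Set atom) : Set atom := TplusOmega (GLreduct P M)

/-- Stable model. -/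
def Stable (P : Program atom) (M : Set atom) : Prop := GLop P M = M

def posLits (S : Set atom) : Interp atom := Lit.pos '' S
def negLits (S : Set atom) : Interp atom := Lit.neg '' S

/-- Three-valued immediate-consequence operator `T_P`. -/
def TP (P : Program atom) (I : Interp atom) : Set atom :=
  {A | ∃ C ∈ P, C.head = A ∧ BodyTrue I C}

/-- `F_P`: atoms all of whose clauses have false bodies. -/
def FP (P : Program atom) (I : Interp atom) : Set atom :=
  {A | ∀ C ∈ P, C.head = A → BodyFalse I C}

/-- Fitting's operator `Φ_P`. -/
def Phi (P : Program atom) (I : Interp atom) : Interp atom :=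
  posLits (TP P I) ∪ negLits (FP P I)

/-- Knaster–Tarski least (pre-)fixed point of an operator on sets. -/
def lfpSet {L : Type*} (F : Set L → Set L) : Set L := ⋂₀ {I | F I ⊆ I}

/-- Knaster–Tarski greatest (post-)fixed point of an operator on sets. -/
def gfpSet {L : Type*} (F : Set L → Set L) : Set L := ⋃₀ {I | I ⊆ F I}

/-- The Fitting (Kripke–Kleene) model: least fixed point of `Φ_P`. -/
def FittingModel (P : Program atom) : Interp atom := lfpSet (Phi P)

/-- Transfinite iteration `F ↑ α` of an operator starting from `∅`. -/
noncomputable def iterOrd {L : Type*} (F : Set L → Set L) (α : Ordinal.{0}) : Set L :=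
  Ordinal.limitRecOn α ∅ (fun _ ih => F ih) (fun o _ ih => ⋃ β, ⋃ h : β < o, ih β h)

/-- `U` is an unfounded set of `P` with respect to `I`. -/
def Unfounded (P : Program atom) (I : Interp atom) (U : Set atom) : Prop :=
  ∀ A ∈ U, ∀ C ∈ P, C.head = A → BodyFalse I C ∨ ∃ a ∈ C.pos, a ∈ U

/-- The greatest unfounded set of `P` with respect to `I`. -/
def UP (P : Program atom) (I : Interp atom) : Set atom := ⋃₀ {U | Unfounded P I U}

/-- The van Gelder–Ross–Schlipf operator `W_P`. -/
def WP (P : Program atom) (I : Interp atom) : Interp atom :=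
  posLits (TP P I) ∪ negLits (UP P I)

/-- The well-founded model: least fixed point of `W_P`. -/
def WFModel (P : Program atom) : Interp atom := lfpSet (WP P)

/-- `P` satisfies (F) with respect to `I` and the level mapping `l`. -/
def CondF (P : Program atom) (I : Interp atom) (l : atom → Ordinal.{0}) : Prop :=
  ∀ A : atom, Defined I A →
    (Lit.pos A ∈ I ∧ ∃ C ∈ P, C.head = A ∧
        (∀ a ∈ C.pos, Lit.pos a ∈ I ∧ l a < l A) ∧
        (∀ b ∈ C.neg, Lit.neg b ∈ I ∧ l b < l A)) ∨
    (Lit.neg A ∈ I ∧ ∀ C ∈ P, C.head = A →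
        (∃ a ∈ C.pos, Lit.neg a ∈ I ∧ l a < l A) ∨
        (∃ b ∈ C.neg, Lit.pos b ∈ I ∧ l b < l A))

/-- `P` satisfies (WF) with respect to `I` and the level mapping `l`. -/
def CondWF (P : Program atom) (I : Interp atom) (l : atom → Ordinal.{0}) : Prop :=
  ∀ A : atom, Defined I A →
    (Lit.pos A ∈ I ∧ ∃ C ∈ P, C.head = A ∧
        (∀ a ∈ C.pos, Lit.pos a ∈ I ∧ l a < l A) ∧
        (∀ b ∈ C.neg, Lit.neg b ∈ I ∧ l b < l A)) ∨
    (Lit.neg A ∈ I ∧ ∀ C ∈ P, C.head = A →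
        (∃ a ∈ C.pos, Lit.neg a ∈ I ∧ l a ≤ l A) ∨
        (∃ b ∈ C.neg, Lit.pos b ∈ I ∧ l b < l A))

/-- `P` satisfies (WS) with respect to `I` and the level mapping `l`. -/
def CondWS (P : Program atom) (I : Interp atom) (l : atom → Ordinal.{0}) : Prop :=
  ∀ A : atom, Defined I A →
    (Lit.pos A ∈ I ∧ ∃ C ∈ P, C.head = A ∧
        (∀ a ∈ C.pos, Lit.pos a ∈ I ∧ l a < l A) ∧
        (∀ b ∈ C.neg, Lit.neg b ∈ I ∧ l b < l A)) ∨
    (Lit.neg A ∈ I ∧ ∀ C ∈ P, C.head = A →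
        (∃ a ∈ C.pos, Lit.neg a ∈ I ∧ l a < l A) ∨
        ((∀ a ∈ C.pos, l a ≤ l A) ∧ (∀ b ∈ C.neg, l b < l A) ∧
            ∃ a ∈ C.pos, Lit.neg a ∈ I) ∨
        (∃ b ∈ C.neg, Lit.pos b ∈ I ∧ l b < l A))

/-- `A` refers to `B`. -/
def RefersTo (P : Program atom) (A B : atom) : Prop :=
  ∃ C ∈ P, C.head = A ∧ (B ∈ C.pos ∨ B ∈ C.neg)

/-- `A` refers negatively to `B`. -/
def RefersNeg (P : Program atom) (A B : atom) : Prop :=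
  ∃ C ∈ P, C.head = A ∧ B ∈ C.neg

/-- `DepOn P A B`: `A` depends on `B`, i.e. `B ≤ A`. -/
def DepOn (P : Program atom) : atom → atom → Prop := Relation.TransGen (RefersTo P)

/-- `DepNeg P B A`: `B < A`, i.e. `A` depends negatively on `B`. -/
def DepNeg (P : Program atom) (B A : atom) : Prop :=
  ∃ C D, RefersNeg P C D ∧ (DepOn P A C ∨ C = A) ∧ (DepOn P D B ∨ B = D)

/-- `A ~ B`. -/
def Sim (P : Program atom) (A B : atom) : Prop :=
  A = B ∨ (DepNeg P A B ∧ DepNeg P B A)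

/-- The components of `P`: equivalence classes of `~`. -/
def IsComponent (P : Program atom) (C : Set atom) : Prop :=
  ∃ A : atom, C = {B | Sim P A B}

/-- A trivial component: a singleton `{A}` with `A ≮ A`. -/
def TrivialComponent (P : Program atom) (C : Set atom) : Prop :=
  ∃ A : atom, C = {A} ∧ ¬ DepNeg P A A

/-- The ordering `≺` on components. -/
def CompLt (P : Program atom) (C₁ C₂ : Set atom) : Prop :=
  C₁ ≠ C₂ ∧ ∀ A₁ ∈ C₁, ∃ A₂ ∈ C₂, DepNeg P A₁ A₂

def MinimalComponent (P : Program atom) (C : Set atom) : Prop :=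
  IsComponent P C ∧ ¬ ∃ C₂, IsComponent P C₂ ∧ CompLt P C₂ C

/-- The bottom stratum `S(P)`: union of all minimal components. -/
def bottomStratum (P : Program atom) : Set atom :=
  {A | ∃ C, MinimalComponent P C ∧ A ∈ C}

/-- The bottom layer `L(P)`: clauses with head in the bottom stratum. -/
def bottomLayer (P : Program atom) : Program atom :=
  {C ∈ P | C.head ∈ bottomStratum P}

/-- Delete from the body of `C` all literals true in `I`. -/
noncomputable def reduceClause (I : Interp atom) (C : Clause atom) : Clause atom :=
  letI : ∀ p : Prop, Decidable p := fun p => Classical.propDecidable p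
  ⟨C.head, C.pos.filter (fun a => Lit.pos a ∉ I), C.neg.filter (fun b => Lit.neg b ∉ I)⟩

/-- Steps (1) and (2) of the reduct of `P` with respect to `I`. -/
noncomputable def step12 (P : Program atom) (I : Interp atom) : Program atom :=
  {C' | ∃ C ∈ P, Lit.pos C.head ∉ I ∧ ¬ BodyFalse I C ∧ C' = reduceClause I C}

def IsUnitClause (C : Clause atom) : Prop := C.pos = ∅ ∧ C.neg = ∅

/-- The reduct `P/I` of Przymusinska–Przymusinski (steps (1)–(3)). -/
noncomputable def reduct (P : Program atom) (I : Interp atom) : Program atom :=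
  {C ∈ step12 P I | IsUnitClause C ∨ ¬ ∃ C' ∈ step12 P I, C'.head = C.head ∧ IsUnitClause C'}

/-- The atoms occurring in `P`. -/
def atomsOf (P : Program atom) : Set atom :=
  {A | ∃ C ∈ P, A = C.head ∨ A ∈ C.pos ∨ A ∈ C.neg}

/-- `R`: atoms undefined in `N` which are eliminated from `P` by reducing w.r.t. `N`. -/
noncomputable def Ratoms (P : Program atom) (N : Interp atom) : Set atom :=
  {A | A ∈ atomsOf P ∧ A ∉ atomsOf (reduct P N) ∧ ¬ Defined N A}

/-- The definite (partial) model of a definite program `Q`. -/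
def defPartialModel (Q : Program atom) : Interp atom :=
  posLits (TplusOmega Q) ∪ negLits (atomsOf Q \ TplusOmega Q)

/-- The stopping condition of the weakly perfect model construction at `N`. -/
noncomputable def stopCond (P : Program atom) (N : Interp atom) : Prop :=
  reduct P N = ∅ ∨ bottomStratum (reduct P N) = ∅ ∨
    ∃ C ∈ bottomLayer (reduct P N), C.neg ≠ ∅

/-- `M_α` computed from `N_α` (empty if the construction has stopped). -/
noncomputable def Mstep (P : Program atom) (N : Interp atom) : Interp atom :=
  letI : ∀ p : Prop, Decidable p := fun p => Classical.propDecidable p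
  if stopCond P N then ∅
  else defPartialModel (bottomLayer (reduct P N)) ∪ negLits (Ratoms P N)

/-- `N_α = ⋃_{0<δ<α} M_δ` of the weakly perfect model construction. -/
noncomputable def Nseq (P : Program atom) : Ordinal.{0} → Interp atom :=
  Ordinal.lt_wf.fix (C := fun _ => Interp atom)
    (fun α ih => ⋃ β : Ordinal.{0}, ⋃ h : β < α, Mstep P (ih β h))

/-- The stage at which the weakly perfect model construction stops. -/
noncomputable def wpStop (P : Program atom) : Ordinal.{0} :=
  sInf {α | stopCond P (Nseq P α)}

/-- The weakly perfect model `M_P = N_α ∪ ¬R_α` at the stopping stage `α`. -/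
noncomputable def weaklyPerfectModel (P : Program atom) : Interp atom :=
  Nseq P (wpStop P) ∪ negLits (Ratoms P (Nseq P (wpStop P)))

/-- Clause subsumption `C₁ ≼ C₂`. -/
def ClauseSub (C₁ C₂ : Clause atom) : Prop :=
  C₁.head = C₂.head ∧ C₁.pos ⊆ C₂.pos ∧ C₁.neg ⊆ C₂.neg

/-- `P'` subsumes `Q` model-consistently with respect to `I`: `P' ≼_I Q`. -/
def SubsumesMC (P' Q : Program atom) (I : Interp atom) : Prop :=
  (∀ C₁ ∈ P', ∃ C₂ ∈ Q, ClauseSub C₁ C₂ ∧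
      (∀ a ∈ C₂.pos, a ∉ C₁.pos → Lit.pos a ∈ I) ∧
      (∀ b ∈ C₂.neg, b ∉ C₁.neg → Lit.neg b ∈ I)) ∧
  (∀ C₂ ∈ Q, BodyTrue I C₂ → Lit.pos C₂.head ∉ I → ∃ C₁ ∈ P', ClauseSub C₁ C₂)


section Helpers
variable {L : Type} (F : Set L → Set L)

lemma iterOrd_zero : iterOrd F 0 = ∅ := by
  simp [iterOrd]

lemma iterOrd_succ (α : Ordinal.{0}) : iterOrd F (α + 1) = F (iterOrd F α) := by
  simp only [iterOrd]
  exact Ordinal.limitRecOn_add_one ..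

lemma iterOrd_limit (α : Ordinal.{0}) (h : Order.IsSuccLimit α) :
    iterOrd F α = ⋃ β, ⋃ _ : β < α, iterOrd F β := by
  simp only [iterOrd]
  rw [Ordinal.limitRecOn_limit (h := h)]

variable {F}

lemma iterOrd_sub_limit {α β : Ordinal.{0}} (h : Order.IsSuccLimit α) (hb : β < α) :
    iterOrd F β ⊆ iterOrd F α := by
  rw [iterOrd_limit F α h]
  exact Set.subset_iUnion₂_of_subset β hb subset_rfl

lemma iterOrd_sub_step (hF : Monotone F) (α : Ordinal.{0}) :
    iterOrd F α ⊆ iterOrd F (α + 1) := by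
  induction α using Ordinal.limitRecOn with
  | zero => simp [iterOrd_zero]
  | add_one o ih =>
    have : F (iterOrd F o) ⊆ F (iterOrd F (o + 1)) := hF ih
    rw [← iterOrd_succ F o, ← iterOrd_succ F (o + 1)] at this
    exact this
  | limit o ho ih =>
    intro x hx
    rw [iterOrd_limit F o ho] at hx
    simp only [Set.mem_iUnion] at hx
    obtain ⟨β, hb, hx⟩ := hx
    have h1 := ih β hb hx
    rw [iterOrd_succ] at h1 ⊢
    exact hF (iterOrd_sub_limit ho hb) h1

lemma iterOrd_mono (hF : Monotone F) {α β : Ordinal.{0}} (h : α ≤ β) :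
    iterOrd F α ⊆ iterOrd F β := by
  induction β using Ordinal.limitRecOn with
  | zero => rw [nonpos_iff_eq_zero.mp h]
  | add_one o ih =>
    rcases h.lt_or_eq with h | h
    · exact (ih (Order.lt_add_one_iff.mp h)).trans (iterOrd_sub_step hF o)
    · rw [h]
  | limit o ho ih =>
    rcases h.lt_or_eq with h | h
    · exact iterOrd_sub_limit ho h
    · rw [h]

lemma iterOrd_sub_lfp (hF : Monotone F) (α : Ordinal.{0}) : iterOrd F α ⊆ lfpSet F := by
  rw [lfpSet]
  refine Set.subset_sInter fun I (hI : F I ⊆ I) => ?_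
  induction α using Ordinal.limitRecOn with
  | zero => simp [iterOrd_zero]
  | add_one o ih => rw [iterOrd_succ]; exact (hF ih).trans hI
  | limit o ho ih => rw [iterOrd_limit F o ho]; exact Set.iUnion₂_subset ih

lemma exists_lfp_sub (hF : Monotone F) : ∃ α : Ordinal.{0}, lfpSet F ⊆ iterOrd F α := by
  have h := not_injective_of_ordinal (iterOrd F)
  simp only [Function.Injective, not_forall] at h
  obtain ⟨α, β, h, hne⟩ := h
  wlog hlt : α < β generalizing α β
  · exact this β α h.symm (Ne.symm hne) (lt_of_le_of_ne (not_lt.mp hlt) (Ne.symm hne))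
  refine ⟨α, Set.sInter_subset_of_mem ?_⟩
  show F (iterOrd F α) ⊆ iterOrd F α
  rw [← iterOrd_succ F α]
  conv_rhs => rw [h]
  exact iterOrd_mono hF (Order.add_one_le_of_lt hlt)

/-- A member of a stage appears at a successor stage below it. -/
lemma mem_iterOrd_succ (hF : Monotone F) {α : Ordinal.{0}} {x : L} (hx : x ∈ iterOrd F α) :
    ∃ β < α, x ∈ iterOrd F (β + 1) := by
  induction α using Ordinal.limitRecOn with
  | zero => simp [iterOrd_zero] at hx
  | add_one o ih => exact ⟨o, Order.lt_add_one_iff.mpr le_rfl, hx⟩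
  | limit o ho ih =>
    rw [iterOrd_limit F o ho] at hx
    simp only [Set.mem_iUnion] at hx
    obtain ⟨β, hb, hx⟩ := hx
    exact ⟨β, hb, iterOrd_sub_step hF β hx⟩

end Helpers

lemma BodyFalse.mono {I J : Interp atom} (h : I ⊆ J) {C : Clause atom} (hC : BodyFalse I C) :
    BodyFalse J C := by
  rcases hC with ⟨a, ha, h'⟩ | ⟨a, ha, h'⟩
  · exact Or.inl ⟨a, ha, h h'⟩
  · exact Or.inr ⟨a, ha, h h'⟩

lemma UP_unfounded (P : Program atom) (I : Interp atom) : Unfounded P I (UP P I) := by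
  rintro A ⟨U, hU, hA⟩ C hC hh
  rcases hU A hA C hC hh with h | ⟨a, ha, hau⟩
  · exact Or.inl h
  · exact Or.inr ⟨a, ha, U, hU, hau⟩

lemma WP_mono (P : Program atom) : Monotone (WP P) := by
  intro I J hIJ
  refine Set.union_subset_union (Set.image_mono ?_) (Set.image_mono ?_)
  · rintro A ⟨C, hC, hh, h1, h2⟩
    exact ⟨C, hC, hh, fun a ha => hIJ (h1 a ha), fun a ha => hIJ (h2 a ha)⟩
  · rintro A ⟨U, hU, hA⟩
    exact ⟨U, fun A hA C hC hh => (hU A hA C hC hh).imp_left (BodyFalse.mono hIJ), hA⟩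

/-- `P` satisfies (WF) w.r.t. its well-founded model and the level mapping
`l_P(A) = least α such that A is not undefined in W_P↑(α+1)`. -/
theorem wellfounded_levels_satisfy_WF {atom : Type} [Countable atom] (P : Program atom) :
    CondWF P (WFModel P)
      (fun A => sInf {α : Ordinal.{0} | Defined (iterOrd (WP P) (α + 1)) A}) := by
  intro A hA
  have hF := WP_mono P
  have hsub := iterOrd_sub_lfp hF
  obtain ⟨γ, hγ⟩ := exists_lfp_sub hF
  have hne : {α : Ordinal.{0} | Defined (iterOrd (WP P) (α + 1)) A}.Nonempty :=
    ⟨γ, hA.imp (fun h => iterOrd_sub_step hF γ (hγ h)) (fun h => iterOrd_sub_step hF γ (hγ h))⟩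
  have hmem := csInf_mem hne
  beta_reduce
  set α := sInf {α : Ordinal.{0} | Defined (iterOrd (WP P) (α + 1)) A} with hα
  clear_value α
  have hle : ∀ a β, Defined (iterOrd (WP P) (β + 1)) a →
      sInf {α : Ordinal.{0} | Defined (iterOrd (WP P) (α + 1)) a} ≤ β :=
    fun a β h => csInf_le' h
  have hpos : ∀ a, Lit.pos a ∈ iterOrd (WP P) α →
      Lit.pos a ∈ WFModel P ∧
      sInf {α : Ordinal.{0} | Defined (iterOrd (WP P) (α + 1)) a} < α := by
    intro a h
    obtain ⟨β, hb, hx⟩ := mem_iterOrd_succ hF h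
    exact ⟨hsub _ h, (hle a β (Or.inl hx)).trans_lt hb⟩
  have hneg : ∀ a, Lit.neg a ∈ iterOrd (WP P) α →
      Lit.neg a ∈ WFModel P ∧
      sInf {α : Ordinal.{0} | Defined (iterOrd (WP P) (α + 1)) a} < α := by
    intro a h
    obtain ⟨β, hb, hx⟩ := mem_iterOrd_succ hF h
    exact ⟨hsub _ h, (hle a β (Or.inr hx)).trans_lt hb⟩
  rcases hmem with h | h
  · left
    refine ⟨hsub _ h, ?_⟩
    rw [iterOrd_succ] at h
    rcases h with ⟨B, ⟨C, hC, hh, h1, h2⟩, hB⟩ | ⟨B, _, hB⟩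
    · cases hB
      exact ⟨C, hC, hh, fun a ha => hpos a (h1 a ha), fun b hb => hneg b (h2 b hb)⟩
    · cases hB
  · right
    refine ⟨hsub _ h, fun C hC hh => ?_⟩
    rw [iterOrd_succ] at h
    rcases h with ⟨B, _, hB⟩ | ⟨B, hU, hB⟩
    · cases hB
    · cases hB
      rcases UP_unfounded P _ _ hU C hC hh with (⟨a, ha, h⟩ | ⟨b, hb, h⟩) | ⟨a, ha, h⟩
      · exact Or.inl ⟨a, ha, (hneg a h).1, (hneg a h).2.le⟩
      · exact Or.inr ⟨b, hb, hpos b h⟩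
      · have h' : Lit.neg a ∈ iterOrd (WP P) (α + 1) := by
          rw [iterOrd_succ]
          exact Or.inr ⟨a, h, rfl⟩
        exact Or.inl ⟨a, ha, hsub _ h', hle a α (Or.inr h')⟩

end LP
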